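/- arXiv:2107.07815 — 3 statements merged into one kernel-verified Lean document; each statement's English description precedes it below -/
import Mathlib

section
/- The factor 2k for greedy is tight: for every k ≥ 1 and every ε > 0 there exist an Ext-TSP instance (namely, for suitable ℓ, the graph consisting of ℓ 'center' vertices joined in a path, each center having 2k pendant leaves, all edge weights equal to 1, with discount f(i) = 1 for i ≤ k and f(i) = 0 for i > k) and an enumeration u_1, …, u_n of its vertices satisfying the greedy property (for every i < n and every v ∈ {u_{i+1},…,u_n}, w(u_i,u_{i+1}) ≥ w(u_i,v), with w = 0 on non-edges) such that the resulting ordering d has val(d) = ℓ − 1 + k while OPT ≥ 2kℓ; in particular OPT > (2k − ε)·val(d). -/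
open Classical in
/-- The Ext-TSP value of an ordering `d` of the vertices of `G`. -/
noncomputable def extVal {V : Type} [Fintype V] (G : SimpleGraph V)
    (w : V → V → ℝ) (f : ℕ → ℝ) (d : V ≃ Fin (Fintype.card V)) : ℝ :=
  (1 / 2) * ∑ u : V, ∑ v : V,
    if G.Adj u v then f (Nat.dist (d u) (d v)) * w u v else 0

open Classical in
/-- Unit weights on the edges of `G` (and `0` on non-edges). -/
noncomputable def unitW {V : Type} (G : SimpleGraph V) : V → V → ℝ :=
  fun u v => if G.Adj u v then 1 else 0

/-- The step discount function: `f i = 1` for `i ≤ k` and `f i = 0` for `i > k`. -/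
def stepF (k : ℕ) : ℕ → ℝ := fun i => if i ≤ k then 1 else 0

/-- The vertex set of the tight instance for greedy: `ℓ` centers (joined in a path) with
`2k` pendant leaves each. -/
abbrev StarPathV (k ℓ : ℕ) : Type := Fin ℓ ⊕ Fin ℓ × Fin (2 * k)

/-- The tight instance for greedy: centers `Sum.inl i` and `Sum.inl (i+1)` are joined by a
path edge, and each leaf `Sum.inr (i, t)` is joined to its center `Sum.inl i`. -/
def starPathGraph (k ℓ : ℕ) : SimpleGraph (StarPathV k ℓ) :=
  SimpleGraph.fromRel (fun a b =>
    (∃ i j : Fin ℓ, a = Sum.inl i ∧ b = Sum.inl j ∧ (j : ℕ) = (i : ℕ) + 1) ∨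
    (∃ (i : Fin ℓ) (p : Fin ℓ × Fin (2 * k)), a = Sum.inl i ∧ b = Sum.inr p ∧ p.1 = i))

/-!
Order the star path greedily by walking along the path of centers first. Only the last center then
has leaves within distance `k`, and exactly `k` of them, so apart from the `ℓ - 1` path edges almost
nothing is gained. Listing the stars one after another, each center in the middle of its `2k`
leaves, instead realises all `2kℓ` pendant edges. As `k` is fixed and `ℓ` grows, the ratio tends
to `2k`.
-/

section General

variable {V : Type} {G : SimpleGraph V}

theorem unitW_le_unitW_iff {u v u' v' : V} :
    unitW G u v ≤ unitW G u' v' ↔ (G.Adj u v → G.Adj u' v') := by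
  by_cases h : G.Adj u v <;> by_cases h' : G.Adj u' v' <;> simp [unitW, h, h']

theorem unitW_comm (u v : V) : unitW G u v = unitW G v u :=
  le_antisymm (unitW_le_unitW_iff.2 fun h => h.symm) (unitW_le_unitW_iff.2 fun h => h.symm)

variable [Fintype V]

/-- The greedy property of the enumeration `u_i = d.symm i`: the successor of each vertex maximises
the weight to it among all later vertices. -/
def IsGreedyOrdering (w : V → V → ℝ) (d : V ≃ Fin (Fintype.card V)) : Prop :=
  ∀ (i j : Fin (Fintype.card V)) (hi : (i : ℕ) + 1 < Fintype.card V), (i : ℕ) < (j : ℕ) →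
    w (d.symm i) (d.symm j) ≤ w (d.symm i) (d.symm ⟨(i : ℕ) + 1, hi⟩)

theorem isGreedyOrdering_unitW_iff {d : V ≃ Fin (Fintype.card V)} :
    IsGreedyOrdering (unitW G) d ↔
      ∀ (u v : V) (hu : (d u : ℕ) + 1 < Fintype.card V), d u < d v →
        G.Adj u v → G.Adj u (d.symm ⟨(d u : ℕ) + 1, hu⟩) := by
  simp only [IsGreedyOrdering, unitW_le_unitW_iff, d.surjective.forall, Equiv.symm_apply_apply,
    Fin.lt_def]

open Classical in
theorem extVal_eq_sum_of_adj_iff {w : V → V → ℝ} (hw : ∀ u v, w u v = w v u)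
    {r : V → V → Prop} (hr : ∀ u v, r u v → ¬ r v u)
    (hG : ∀ u v, G.Adj u v ↔ r u v ∨ r v u) (f : ℕ → ℝ) (d : V ≃ Fin (Fintype.card V)) :
    extVal G w f d = ∑ u, ∑ v, if r u v then f (Nat.dist (d u) (d v)) * w u v else 0 := by
  have hsplit (u v : V) : (if G.Adj u v then f (Nat.dist (d u) (d v)) * w u v else 0) =
      (if r u v then f (Nat.dist (d u) (d v)) * w u v else 0) +
        if r v u then f (Nat.dist (d v) (d u)) * w v u else 0 := by
    rw [Nat.dist_comm (d v), hw v]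
    by_cases huv : r u v
    · simp [hG, huv, hr u v huv]
    · simp [hG, huv]
  simp only [extVal, hsplit, Finset.sum_add_distrib]
  rw [Finset.sum_comm (f := fun u v => if r v u then _ else _)]
  ring

theorem extVal_le_iSup (G : SimpleGraph V) (w : V → V → ℝ) (f : ℕ → ℝ)
    (d : V ≃ Fin (Fintype.card V)) : extVal G w f d ≤ ⨆ d', extVal G w f d' :=
  le_ciSup (Set.finite_range _).bddAbove d

end General

section StepDiscount

variable {k i : ℕ}

theorem stepF_of_le (h : i ≤ k) : stepF k i = 1 :=
  if_pos h

theorem stepF_of_lt (h : k < i) : stepF k i = 0 :=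
  if_neg h.not_ge

theorem stepF_nonneg (k i : ℕ) : 0 ≤ stepF k i := by
  unfold stepF
  split_ifs <;> norm_num

theorem sum_range_stepF {n : ℕ} (h : k ≤ n) : ∑ t ∈ Finset.range n, stepF k (t + 1) = k := by
  have hfilter : (Finset.range n).filter (· + 1 ≤ k) = Finset.range k := by
    ext t
    simp only [Finset.mem_filter, Finset.mem_range]
    omega
  simp only [stepF, Finset.sum_boole, hfilter, Finset.card_range]

end StepDiscount

theorem sum_sum_ite_val_eq_succ {M : Type*} [AddCommMonoid M] {m : ℕ}
    (g : Fin (m + 1) → Fin (m + 1) → M) :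
    (∑ i : Fin (m + 1), ∑ j : Fin (m + 1), if (j : ℕ) = (i : ℕ) + 1 then g i j else 0) =
      ∑ i : Fin m, g i.castSucc i.succ := by
  have hlast : (∑ j : Fin (m + 1), if (j : ℕ) = (Fin.last m : ℕ) + 1 then g (Fin.last m) j else 0) =
      0 :=
    Finset.sum_eq_zero fun j _ => if_neg (by simp only [Fin.val_last]; omega)
  have hsucc (i : Fin m) (j : Fin (m + 1)) : (j : ℕ) = (i.castSucc : ℕ) + 1 ↔ j = i.succ := by
    simp [Fin.ext_iff]
  rw [Fin.sum_univ_castSucc, hlast, add_zero]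
  simp only [hsucc, Finset.sum_ite_eq', Finset.mem_univ, if_true]

theorem exists_nat_sub_mul_add_lt (a b : ℝ) {ε : ℝ} (hε : 0 < ε) :
    ∃ m : ℕ, (a - ε) * (m + b) < a * (m + 1) := by
  obtain ⟨m, hm⟩ := exists_nat_gt (a * (b - 1) / ε - b)
  rw [sub_lt_iff_lt_add, div_lt_iff₀ hε] at hm
  exact ⟨m, by linarith⟩

section StarPath

variable {k ℓ : ℕ}

/-- The edges of the star path, oriented along the path and from each center to its leaves, so that
a sum over edges becomes a sum over ordered pairs. -/
def StarPathArc : StarPathV k ℓ → StarPathV k ℓ → Prop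
  | Sum.inl i, Sum.inl j => (j : ℕ) = (i : ℕ) + 1
  | Sum.inl i, Sum.inr p => p.1 = i
  | Sum.inr _, _ => False

@[simp]
theorem starPathArc_inl_inl {i j : Fin ℓ} :
    StarPathArc (k := k) (Sum.inl i) (Sum.inl j) ↔ (j : ℕ) = (i : ℕ) + 1 :=
  Iff.rfl

@[simp]
theorem starPathArc_inl_inr {i : Fin ℓ} {p : Fin ℓ × Fin (2 * k)} :
    StarPathArc (Sum.inl i) (Sum.inr p) ↔ p.1 = i :=
  Iff.rfl

@[simp]
theorem not_starPathArc_inr {p : Fin ℓ × Fin (2 * k)} {v : StarPathV k ℓ} :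
    ¬ StarPathArc (Sum.inr p) v :=
  id

theorem StarPathArc.asymm (u v : StarPathV k ℓ) (h : StarPathArc u v) : ¬ StarPathArc v u := by
  rcases u with i | p <;> rcases v with j | q 
  · simp only [starPathArc_inl_inl] at h ⊢
    omega
  all_goals simp_all

theorem starPathGraph_adj_iff (u v : StarPathV k ℓ) :
    (starPathGraph k ℓ).Adj u v ↔ StarPathArc u v ∨ StarPathArc v u := by
  rcases u with i | ⟨i, s⟩ <;> rcases v with j | ⟨j, t⟩
  · have hne : (j : ℕ) = (i : ℕ) + 1 ∨ (i : ℕ) = (j : ℕ) + 1 → i ≠ j := by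
      rintro h rfl
      omega
    simpa [starPathGraph] using hne
  all_goals simp [starPathGraph]

theorem extVal_starPathGraph (f : ℕ → ℝ)
    (d : StarPathV k ℓ ≃ Fin (Fintype.card (StarPathV k ℓ))) :
    extVal (starPathGraph k ℓ) (unitW (starPathGraph k ℓ)) f d =
      (∑ i : Fin ℓ, ∑ j : Fin ℓ,
        if (j : ℕ) = (i : ℕ) + 1 then f (Nat.dist (d (Sum.inl i)) (d (Sum.inl j))) else 0) +
      ∑ p : Fin ℓ × Fin (2 * k), f (Nat.dist (d (Sum.inl p.1)) (d (Sum.inr p))) := by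
  classical
  have hunit (u v : StarPathV k ℓ) :
      (if StarPathArc u v then f (Nat.dist (d u) (d v)) * unitW (starPathGraph k ℓ) u v else 0) =
        if StarPathArc u v then f (Nat.dist (d u) (d v)) else 0 := by
    split_ifs with h
    · simp [unitW, starPathGraph_adj_iff, h]
    · rfl
  rw [extVal_eq_sum_of_adj_iff unitW_comm StarPathArc.asymm starPathGraph_adj_iff]
  simp only [hunit, Fintype.sum_sum_type, starPathArc_inl_inl, starPathArc_inl_inr,
    not_starPathArc_inr, if_false, Finset.sum_const_zero, add_zero, Finset.sum_add_distrib]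
  congr 1
  rw [Finset.sum_comm]
  simp

theorem card_starPathV (k ℓ : ℕ) : Fintype.card (StarPathV k ℓ) = ℓ + ℓ * (2 * k) := by
  simp

/-- The greedy ordering: the centers along the path, followed by the leaves, those of the last
center first. -/
def centersFirst (k ℓ : ℕ) : StarPathV k ℓ ≃ Fin (Fintype.card (StarPathV k ℓ)) :=
  (Equiv.sumCongr (Equiv.refl _) ((Equiv.prodCongr Fin.revPerm (Equiv.refl _)).trans
    finProdFinEquiv)).trans (finSumFinEquiv.trans (finCongr (card_starPathV k ℓ).symm))

theorem val_centersFirst_inl (i : Fin ℓ) : (centersFirst k ℓ (Sum.inl i) : ℕ) = i :=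
  rfl

theorem val_centersFirst_inr (p : Fin ℓ × Fin (2 * k)) :
    (centersFirst k ℓ (Sum.inr p) : ℕ) = ℓ + (p.2 + 2 * k * p.1.rev) :=
  rfl

theorem adj_next_centersFirst (hk : 1 ≤ k) (i : Fin ℓ)
    (hi : (centersFirst k ℓ (Sum.inl i) : ℕ) + 1 < Fintype.card (StarPathV k ℓ)) :
    (starPathGraph k ℓ).Adj (Sum.inl i)
      ((centersFirst k ℓ).symm ⟨(centersFirst k ℓ (Sum.inl i) : ℕ) + 1, hi⟩) := by
  obtain hlt | hlast : (i : ℕ) + 1 < ℓ ∨ (i : ℕ) + 1 = ℓ := by omega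
  · have hnext : (centersFirst k ℓ).symm ⟨(centersFirst k ℓ (Sum.inl i) : ℕ) + 1, hi⟩ =
        Sum.inl ⟨i + 1, hlt⟩ :=
      (Equiv.symm_apply_eq _).2 rfl
    rw [hnext, starPathGraph_adj_iff]
    exact Or.inl rfl
  · have hnext : (centersFirst k ℓ).symm ⟨(centersFirst k ℓ (Sum.inl i) : ℕ) + 1, hi⟩ =
        Sum.inr (i, ⟨0, by omega⟩) := by
      rw [Equiv.symm_apply_eq, Fin.ext_iff, val_centersFirst_inr]
      simp [val_centersFirst_inl, Fin.val_rev, hlast]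
    rw [hnext, starPathGraph_adj_iff]
    exact Or.inl rfl

theorem isGreedyOrdering_centersFirst (hk : 1 ≤ k) (ℓ : ℕ) :
    IsGreedyOrdering (unitW (starPathGraph k ℓ)) (centersFirst k ℓ) := by
  rw [isGreedyOrdering_unitW_iff]
  rintro (i | p) v hu huv hadj
  · exact adj_next_centersFirst hk i hu
  · obtain ⟨j, rfl⟩ : ∃ j, v = Sum.inl j := by
      rcases v with j | q
      · exact ⟨j, rfl⟩
      · simp [starPathGraph_adj_iff] at hadj
    rw [Fin.lt_def, val_centersFirst_inl, val_centersFirst_inr] at huv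
    omega

theorem dist_centersFirst_leaf (i : Fin ℓ) (t : Fin (2 * k)) :
    Nat.dist (centersFirst k ℓ (Sum.inl i)) (centersFirst k ℓ (Sum.inr (i, t))) =
      (2 * k + 1) * i.rev + (t + 1) := by
  rw [val_centersFirst_inl, val_centersFirst_inr, Nat.dist_eq_sub_of_le (by omega), Nat.add_mul]
  simp only [Fin.val_rev]
  omega

theorem extVal_centersFirst (k m : ℕ) (f : ℕ → ℝ) :
    extVal (starPathGraph k (m + 1)) (unitW (starPathGraph k (m + 1))) f (centersFirst k (m + 1)) =
      m * f 1 + ∑ i : Fin (m + 1), ∑ t : Fin (2 * k), f ((2 * k + 1) * i + (t + 1)) := by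
  rw [extVal_starPathGraph, sum_sum_ite_val_eq_succ fun i j =>
    f (Nat.dist (centersFirst k (m + 1) (Sum.inl i)) (centersFirst k (m + 1) (Sum.inl j)))]
  congr 1
  · have hdist (i : Fin m) : Nat.dist (centersFirst k (m + 1) (Sum.inl i.castSucc))
        (centersFirst k (m + 1) (Sum.inl i.succ)) = 1 := by
      simp [val_centersFirst_inl, Nat.dist]
    simp [hdist]
  · simp only [Fintype.sum_prod_type, dist_centersFirst_leaf]
    exact Equiv.sum_comp Fin.revPerm
      fun i : Fin (m + 1) => ∑ t : Fin (2 * k), f ((2 * k + 1) * i + (t + 1))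

theorem extVal_stepF_centersFirst (hk : 1 ≤ k) (m : ℕ) :
    extVal (starPathGraph k (m + 1)) (unitW (starPathGraph k (m + 1))) (stepF k)
      (centersFirst k (m + 1)) = m + k := by
  have hnear : ∑ t : Fin (2 * k), stepF k (t + 1) = k := by
    rw [Fin.sum_univ_eq_sum_range fun t => stepF k (t + 1), sum_range_stepF (by omega)]
  have hfar (i : Fin m) (t : Fin (2 * k)) :
      stepF k ((2 * k + 1) * i.succ + (t + 1)) = 0 :=
    stepF_of_lt (by rw [Fin.val_succ, Nat.mul_succ]; omega)
  simp [extVal_centersFirst, stepF_of_le hk, Fin.sum_univ_succ (n := m), hnear, hfar,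
    -Fin.val_succ]

/-- The near-optimal ordering: the stars one after another, each center in the middle of its
leaves. Here `none : Option (Fin (2 * k))` stands for the center, which takes position `k` of its
block. -/
def starByStar (k ℓ : ℕ) : StarPathV k ℓ ≃ Fin (Fintype.card (StarPathV k ℓ)) :=
  ((Equiv.sumCongr (Equiv.refl _) (Equiv.prodComm _ _)).trans optionProdEquiv.symm).trans <|
    (Equiv.prodComm _ _).trans <|
    (Equiv.prodCongr (Equiv.refl _) (finSuccEquiv' (⟨k, by omega⟩ : Fin (2 * k + 1))).symm).trans <|
    finProdFinEquiv.trans (finCongr (by rw [card_starPathV, Nat.mul_succ, Nat.add_comm]))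

theorem val_starByStar_inl (i : Fin ℓ) :
    (starByStar k ℓ (Sum.inl i) : ℕ) = (2 * k + 1) * i + k :=
  Nat.add_comm _ _

theorem val_starByStar_inr (p : Fin ℓ × Fin (2 * k)) :
    (starByStar k ℓ (Sum.inr p) : ℕ) =
      (2 * k + 1) * p.1 + (⟨k, by omega⟩ : Fin (2 * k + 1)).succAbove p.2 :=
  Nat.add_comm _ _

theorem dist_starByStar_leaf_le (p : Fin ℓ × Fin (2 * k)) :
    Nat.dist (starByStar k ℓ (Sum.inl p.1)) (starByStar k ℓ (Sum.inr p)) ≤ k := by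
  rw [val_starByStar_inl, val_starByStar_inr, Nat.dist_add_add_left, Nat.dist]
  omega

theorem two_mul_mul_le_extVal_starByStar (k ℓ : ℕ) :
    2 * (k : ℝ) * (ℓ : ℝ) ≤
      extVal (starPathGraph k ℓ) (unitW (starPathGraph k ℓ)) (stepF k) (starByStar k ℓ) := by
  rw [extVal_starPathGraph]
  simp only [stepF_of_le (dist_starByStar_leaf_le _)]
  calc 2 * (k : ℝ) * (ℓ : ℝ) = ∑ _p : Fin ℓ × Fin (2 * k), 1 := by simp [mul_comm]
    _ ≤ _ := le_add_of_nonneg_left <| Finset.sum_nonneg fun i _ => Finset.sum_nonneg fun j _ =>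
        ite_nonneg (stepF_nonneg _ _) le_rfl

end StarPath

/-- The factor `2k` for greedy is tight: for every `k ≥ 1` and `ε > 0` there
is an instance (the path of `ℓ` stars with `2k` leaves each, unit weights, step discount) and
a greedy enumeration of its vertices whose ordering `d` has `val(d) = ℓ - 1 + k`, while
`OPT ≥ 2kℓ`; in particular `OPT > (2k - ε)·val(d)`. -/
theorem extTSP_greedy_tight (k : ℕ) (hk : 1 ≤ k) (ε : ℝ) (hε : 0 < ε) :
    ∃ ℓ : ℕ, 1 ≤ ℓ ∧
      ∃ d : StarPathV k ℓ ≃ Fin (Fintype.card (StarPathV k ℓ)),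
        (∀ (i j : Fin (Fintype.card (StarPathV k ℓ)))
            (hi : (i : ℕ) + 1 < Fintype.card (StarPathV k ℓ)),
          (i : ℕ) < (j : ℕ) →
          unitW (starPathGraph k ℓ) (d.symm i) (d.symm j)
            ≤ unitW (starPathGraph k ℓ) (d.symm i) (d.symm ⟨(i : ℕ) + 1, hi⟩)) ∧
        extVal (starPathGraph k ℓ) (unitW (starPathGraph k ℓ)) (stepF k) d
          = (ℓ : ℝ) - 1 + (k : ℝ) ∧
        (⨆ d' : StarPathV k ℓ ≃ Fin (Fintype.card (StarPathV k ℓ)),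
            extVal (starPathGraph k ℓ) (unitW (starPathGraph k ℓ)) (stepF k) d')
          ≥ 2 * (k : ℝ) * (ℓ : ℝ) ∧
        (⨆ d' : StarPathV k ℓ ≃ Fin (Fintype.card (StarPathV k ℓ)),
            extVal (starPathGraph k ℓ) (unitW (starPathGraph k ℓ)) (stepF k) d')
          > (2 * (k : ℝ) - ε) *
              extVal (starPathGraph k ℓ) (unitW (starPathGraph k ℓ)) (stepF k) d := by
  obtain ⟨m, hm⟩ := exists_nat_sub_mul_add_lt (2 * k) k hε
  have hval := extVal_stepF_centersFirst hk m
  have hopt := (two_mul_mul_le_extVal_starByStar k (m + 1)).trans (extVal_le_iSup _ _ _ _)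
  refine ⟨m + 1, by omega, centersFirst k (m + 1), isGreedyOrdering_centersFirst hk (m + 1), ?_,
    hopt, ?_⟩
  · rw [hval, Nat.cast_succ, add_sub_cancel_right]
  · rw [hval]
    exact hm.trans_le (by exact_mod_cast hopt)
end

section
/- Let A ⊆ E be a maximum-weight subset of edges such that every vertex is incident to at most 2 edges of A (so A is a vertex-disjoint union of simple paths and simple cycles), and let A' be obtained from A by deleting a minimum-weight edge from each cycle of A (so A' is a vertex-disjoint union of simple paths). Then every ordering d of V that places the vertices of each path of A' in consecutive positions, in path order, satisfies val(d) ≥ OPT · (k+1)/(k(k+2)); that is, this cycle-cover-based procedure is a (1 + 1/(k+1))·k-approximation for Ext-TSP. -/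
/-! The edges whose ends lie `i` positions apart in a given ordering form a simple 2-matching, and
only the distances `1, …, k` count, so `OPT ≤ F * w(A)` with `F = f 1 + ⋯ + f k`.

Conversely, an ordering that follows the paths of `A'` keeps the full weight of every edge of `A'`.
In a cycle with `j + 1` edges, the ends of the deleted edge are joined by the `j` other edges, so
they lie at most `j` positions apart. The deleted edge carries at most `1 / (j + 1)` of the weight
of its cycle, hence at least the fraction `(j + f j) / (j + 1)` of that weight is retained. Since
`f` is non-increasing with `f 1 = 1`, this is at least the fraction `(k + 1) / (k * (k + 2)) * F`.
-/

open Finset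

section PositionDistance

variable {V : Type*}

/-- The distance between the positions of the two ends of an edge, when vertex `v` sits at
position `p v`. -/
def posDist (p : V → ℕ) : Sym2 V → ℕ :=
  Sym2.lift ⟨fun u v => Nat.dist (p u) (p v), fun _ _ => Nat.dist_comm _ _⟩

@[simp]
lemma posDist_mk (p : V → ℕ) (u v : V) : posDist p s(u, v) = Nat.dist (p u) (p v) := rfl

lemma posDist_pos {p : V → ℕ} (hp : p.Injective) {e : Sym2 V} (he : ¬e.IsDiag) :
    0 < posDist p e := by
  induction e with
  | _ u v => exact Nat.dist_pos_of_ne (hp.ne he)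

lemma posDist_le_walk_length {p : V → ℕ} {H : SimpleGraph V}
    (hp : ∀ e ∈ H.edgeSet, posDist p e ≤ 1) {u v : V} (q : H.Walk u v) :
    posDist p s(u, v) ≤ q.length := by
  induction q with
  | nil => simp
  | @cons a b c hab q ih =>
    have hab_le : posDist p s(a, b) ≤ 1 := hp _ hab
    have htri := Nat.dist.triangle_inequality (p a) (p b) (p c)
    simp only [posDist_mk, SimpleGraph.Walk.length_cons] at *
    lia

/-- Simple 2-matchings, given as sets of edges: every vertex lies on at most two of them. -/
def IsTwoMatching [DecidableEq V] (B : Finset (Sym2 V)) : Prop :=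
  ∀ v : V, #{e ∈ B | v ∈ e} ≤ 2

lemma isTwoMatching_filter_posDist_eq [DecidableEq V] {p : V → ℕ} (hp : p.Injective)
    (E : Finset (Sym2 V)) (i : ℕ) : IsTwoMatching {e ∈ E | posDist p e = i} := by
  intro v
  by_contra! hcard
  obtain ⟨e₁, he₁, e₂, he₂, e₃, he₃, h₁₂, h₁₃, h₂₃⟩ := two_lt_card.1 hcard
  simp only [mem_filter] at he₁ he₂ he₃
  obtain ⟨x, rfl⟩ := Sym2.mem_iff_exists.1 he₁.2
  obtain ⟨y, rfl⟩ := Sym2.mem_iff_exists.1 he₂.2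
  obtain ⟨z, rfl⟩ := Sym2.mem_iff_exists.1 he₃.2
  have hxy : p x ≠ p y := hp.ne fun h => h₁₂ (by rw [h])
  have hxz : p x ≠ p z := hp.ne fun h => h₁₃ (by rw [h])
  have hyz : p y ≠ p z := hp.ne fun h => h₂₃ (by rw [h])
  simp only [posDist_mk, Nat.dist] at he₁ he₂ he₃
  lia

theorem sum_discount_mul_weight_le [DecidableEq V] {p : V → ℕ} (hp : p.Injective)
    {E : Finset (Sym2 V)} (hE : ∀ e ∈ E, ¬e.IsDiag) {W : Sym2 V → ℝ} {f : ℕ → ℝ}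
    (hf_nonneg : ∀ i, 0 ≤ f i) {k : ℕ} (hf_zero : ∀ i, k < i → f i = 0) {M : ℝ}
    (hM : ∀ B ⊆ E, IsTwoMatching B → ∑ e ∈ B, W e ≤ M) :
    ∑ e ∈ E, f (posDist p e) * W e ≤ (∑ i ∈ Ioc 0 k, f i) * M := by
  have hzero : ∀ e ∈ E, f (posDist p e) * W e ≠ 0 → posDist p e ∈ Ioc 0 k := by
    intro e he hne
    refine mem_Ioc.2 ⟨posDist_pos hp (hE e he), ?_⟩
    by_contra! hlt
    exact hne (by rw [hf_zero _ hlt, zero_mul])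
  calc ∑ e ∈ E, f (posDist p e) * W e
      = ∑ i ∈ Ioc 0 k, ∑ e ∈ E with posDist p e = i, f (posDist p e) * W e := by
        rw [sum_fiberwise_eq_sum_filter, sum_filter_of_ne hzero]
    _ = ∑ i ∈ Ioc 0 k, f i * ∑ e ∈ E with posDist p e = i, W e := by
        refine sum_congr rfl fun i _ => ?_
        rw [mul_sum]
        exact sum_congr rfl fun e he => by rw [(mem_filter.1 he).2]
    _ ≤ ∑ i ∈ Ioc 0 k, f i * M := sum_le_sum fun i _ => mul_le_mul_of_nonneg_left
        (hM _ (filter_subset _ _) (isTwoMatching_filter_posDist_eq hp E i)) (hf_nonneg i)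
    _ = (∑ i ∈ Ioc 0 k, f i) * M := (sum_mul ..).symm

end PositionDistance

section Discount

variable {f : ℕ → ℝ}

lemma sum_Ioc_le_of_antitone (hf : Antitone f) {j k : ℕ} (hjk : j ≤ k) :
    ∑ i ∈ Ioc 0 k, f i ≤ j * f 1 + (k - j) * f (j + 1) := by
  rw [← sum_Ioc_consecutive f j.zero_le hjk]
  have hhead : ∑ i ∈ Ioc 0 j, f i ≤ #(Ioc 0 j) • f 1 :=
    sum_le_card_nsmul _ _ _ fun i hi => hf (by grind)
  have htail : ∑ i ∈ Ioc j k, f i ≤ #(Ioc j k) • f (j + 1) :=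
    sum_le_card_nsmul _ _ _ fun i hi => hf (by grind)
  simp only [Nat.card_Ioc, tsub_zero, nsmul_eq_mul, Nat.cast_sub hjk] at hhead htail
  exact add_le_add hhead htail

/-- Every cycle is sure to retain the fraction `c` of its weight: when a cycle has `j + 1` edges
of equal weight, `j` of which join consecutive positions, its remaining edge spans at most `j`
positions, so that its value is at least `j + f j` times the common weight. -/
def IsRetainedFraction (f : ℕ → ℝ) (c : ℝ) : Prop :=
  ∀ j : ℕ, 1 ≤ j → c * (j + 1) ≤ j + f j

lemma IsRetainedFraction.le_one {c : ℝ} (hc : IsRetainedFraction f c) (hf_one : f 1 = 1) :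
    c ≤ 1 := by
  have htwo := hc 1 le_rfl
  rw [hf_one, Nat.cast_one] at htwo
  linarith

lemma discount_sum_mul_le (hf_nonneg : ∀ i, 0 ≤ f i) (hf_mono : Antitone f) (hf_one : f 1 = 1)
    {k : ℕ} (hf_zero : ∀ i, k < i → f i = 0) {j : ℕ} (hj : 1 ≤ j) :
    (k + 1) * (∑ i ∈ Ioc 0 k, f i) * (j + 1) ≤ k * (k + 2) * (j + f j) := by
  obtain ⟨t, rfl⟩ := Nat.exists_eq_add_of_le' hj
  rcases lt_or_ge t k with htk | hkt
  · have hsum := sum_Ioc_le_of_antitone hf_mono htk.le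
    have hx0 := hf_nonneg (t + 1)
    have hx1 : f (t + 1) ≤ 1 := hf_one ▸ hf_mono (by lia)
    have htk' : (t : ℝ) + 1 ≤ k := by exact_mod_cast htk
    rw [hf_one, mul_one] at hsum
    push_cast
    generalize f (t + 1) = x at *
    -- The bound is affine in `x`, so it is enough to compare the values at `x = 0` and `x = 1`.
    have hend0 : ((k : ℝ) + 1) * t * (t + 2) ≤ k * (k + 2) * (t + 1) := by
      have hgap : 0 ≤ ((k : ℝ) - t) * ((k + 1) * (t + 1) + 1) :=
        mul_nonneg (by linarith) (by positivity)
      linarith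
    have hend1 : (k : ℝ) * (k + 1) * (t + 2) ≤ k * (k + 2) * (t + 2) := by
      gcongr
      norm_num
    calc (k + 1) * (∑ i ∈ Ioc 0 k, f i) * (t + 1 + 1)
        ≤ (k + 1) * (t + (k - t) * x) * (t + 1 + 1) := by gcongr
      _ = (1 - x) * ((k + 1) * t * (t + 2)) + x * (k * (k + 1) * (t + 2)) := by ring
      _ ≤ (1 - x) * (k * (k + 2) * (t + 1)) + x * (k * (k + 2) * (t + 2)) :=
        add_le_add (mul_le_mul_of_nonneg_left hend0 (sub_nonneg.2 hx1))
          (mul_le_mul_of_nonneg_left hend1 hx0)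
      _ = k * (k + 2) * (t + 1 + x) := by ring
  · have hsum : ∑ i ∈ Ioc 0 k, f i ≤ k := by
      simpa [hf_one] using sum_Ioc_le_of_antitone hf_mono (le_refl k)
    have hkt' : (k : ℝ) ≤ t := by exact_mod_cast hkt
    rw [hf_zero (t + 1) (by lia)]
    push_cast
    calc (k + 1) * (∑ i ∈ Ioc 0 k, f i) * (t + 1 + 1) ≤ (k + 1) * k * (t + 1 + 1) := by gcongr
      _ ≤ k * (k + 2) * (t + 1 + 0) := by nlinarith

lemma isRetainedFraction_discount_sum (hf_nonneg : ∀ i, 0 ≤ f i) (hf_mono : Antitone f)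
    (hf_one : f 1 = 1) {k : ℕ} (hk : 0 < k) (hf_zero : ∀ i, k < i → f i = 0) :
    IsRetainedFraction f ((k + 1) / (k * (k + 2)) * ∑ i ∈ Ioc 0 k, f i) := by
  intro j hj
  have hden : (0 : ℝ) < k * (k + 2) := by positivity
  rw [div_mul_eq_mul_div, div_mul_eq_mul_div, div_le_iff₀' hden]
  exact discount_sum_mul_le hf_nonneg hf_mono hf_one hf_zero hj

end Discount

section Components

variable {V : Type*}

lemma isCycles_spanningCoe_of_degree_eq_two {H : SimpleGraph V} [H.LocallyFinite]
    {κ : H.ConnectedComponent} (hdeg : ∀ x ∈ κ.supp, H.degree x = 2) :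
    κ.toSimpleGraph.spanningCoe.IsCycles := by
  rintro x ⟨y, hxy⟩
  have hx : x ∈ κ.supp := (κ.adj_spanningCoe_toSimpleGraph.1 hxy).1
  have hnbr : κ.toSimpleGraph.spanningCoe.neighborSet x = H.neighborSet x := by
    ext z
    simp only [SimpleGraph.mem_neighborSet, κ.adj_spanningCoe_toSimpleGraph, hx, true_and]
  rw [hnbr, Set.ncard_eq_toFinset_card', ← hdeg x hx]
  rfl

open Classical in
lemma sum_edgeFinset_eq_sum_connectedComponent {M : Type*} [AddCommMonoid M] [Fintype V]
    (H : SimpleGraph V) [Fintype H.edgeSet] (g : Sym2 V → M) :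
    ∑ e ∈ H.edgeFinset, g e =
      ∑ κ : H.ConnectedComponent, ∑ e ∈ κ.toSimpleGraph.spanningCoe.edgeFinset, g e := by
  have hfiber (κ : H.ConnectedComponent) : κ.toSimpleGraph.spanningCoe.edgeFinset =
      {e ∈ H.edgeFinset | e ∈ κ.toSimpleGraph.spanningCoe.edgeSet} := by
    ext e
    induction e with
    | _ a b =>
      simp only [SimpleGraph.mem_edgeFinset, SimpleGraph.mem_edgeSet, mem_filter,
        κ.adj_spanningCoe_toSimpleGraph]
      tauto
  simp_rw [hfiber, sum_filter]
  rw [sum_comm]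
  refine sum_congr rfl fun e he => ?_
  induction e with
  | _ a b =>
    have hab : H.Adj a b := by simpa using he
    simp [-SimpleGraph.map_adj, SimpleGraph.ConnectedComponent.adj_spanningCoe_toSimpleGraph, hab]

lemma posDist_lt_card_edgeFinset [Finite V] {K : SimpleGraph V} [Fintype K.edgeSet]
    (hK : K.IsCycles) {u v : V} (huv : K.Adj u v) {p : V → ℕ}
    (hp : ∀ e ∈ K.edgeSet, e ≠ s(u, v) → posDist p e ≤ 1) :
    posDist p s(u, v) < #K.edgeFinset := by
  classical
  obtain ⟨q, hq⟩ := (hK.reachable_deleteEdges huv).exists_isPath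
  have : Fintype (K.deleteEdges {s(u, v)}).edgeSet := Fintype.ofFinite _
  calc posDist p s(u, v)
      ≤ q.length := posDist_le_walk_length (fun e he => by
        rw [SimpleGraph.edgeSet_deleteEdges] at he
        exact hp e he.1 he.2) q
    _ ≤ #(K.deleteEdges {s(u, v)}).edgeFinset := hq.isTrail.length_le_card_edgeFinset
    _ < #K.edgeFinset := by
      refine card_lt_card (SimpleGraph.edgeFinset_ssubset_edgeFinset.2 ?_)
      refine lt_of_le_of_ne (K.deleteEdges_le _) fun h => ?_
      rw [← h] at huv
      simp at huv

end Components

section LowerBound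

variable {V : Type*} {W : Sym2 V → ℝ} {f : ℕ → ℝ} {c : ℝ} {p : V → ℕ}

lemma mul_sum_le_sum_discount_of_isCycles [Finite V] {K : SimpleGraph V} [Fintype K.edgeSet]
    (hK : K.IsCycles) {u v : V} (huv : K.Adj u v) (hW : 0 ≤ W s(u, v))
    (hmin : ∀ e ∈ K.edgeSet, W s(u, v) ≤ W e) (hf_mono : Antitone f) (hf_one : f 1 = 1)
    (hc : IsRetainedFraction f c) (hp_inj : p.Injective)
    (hp : ∀ e ∈ K.edgeSet, e ≠ s(u, v) → posDist p e = 1) :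
    c * ∑ e ∈ K.edgeFinset, W e ≤ ∑ e ∈ K.edgeFinset, f (posDist p e) * W e := by
  classical
  have huv_mem : s(u, v) ∈ K.edgeFinset := by simpa using huv
  have hpos : 0 < posDist p s(u, v) := posDist_pos hp_inj (by simpa using huv.ne)
  have hlt := posDist_lt_card_edgeFinset hK huv fun e he hne => (hp e he hne).le
  obtain ⟨j, hj⟩ : ∃ j, #K.edgeFinset = j + 1 := ⟨#K.edgeFinset - 1, by lia⟩
  have hfj : f j ≤ f (posDist p s(u, v)) := hf_mono (by lia)
  have hcard : (j + 1) * W s(u, v) ≤ ∑ e ∈ K.edgeFinset, W e := by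
    simpa [hj] using card_nsmul_le_sum K.edgeFinset W (W s(u, v)) (by simpa using hmin)
  have hloss : ∑ e ∈ K.edgeFinset, f (posDist p e) * W e =
      ∑ e ∈ K.edgeFinset, W e - (1 - f (posDist p s(u, v))) * W s(u, v) := by
    have hkeep : ∀ e ∈ K.edgeFinset.erase s(u, v), f (posDist p e) * W e = W e := by
      intro e he
      obtain ⟨hne, he⟩ := mem_erase.1 he
      rw [hp e (by simpa using he) hne, hf_one, one_mul]
    rw [← sum_erase_add _ _ huv_mem, ← sum_erase_add _ W huv_mem, sum_congr rfl hkeep]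
    ring
  have hloss_le : (1 - f (posDist p s(u, v))) * W s(u, v) ≤
      (1 - c) * ∑ e ∈ K.edgeFinset, W e :=
    calc (1 - f (posDist p s(u, v))) * W s(u, v)
        ≤ (1 - c) * (j + 1) * W s(u, v) := by
          gcongr
          linarith [hc j (by lia)]
      _ ≤ (1 - c) * ∑ e ∈ K.edgeFinset, W e := by
          rw [mul_assoc]
          exact mul_le_mul_of_nonneg_left hcard (sub_nonneg.2 (hc.le_one hf_one))
  linarith

theorem mul_sum_le_sum_discount_of_cut [Finite V] {H : SimpleGraph V} [H.LocallyFinite]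
    [Fintype H.edgeSet]
    (hW : ∀ e ∈ H.edgeSet, 0 ≤ W e) (hf_mono : Antitone f) (hf_one : f 1 = 1)
    (hc : IsRetainedFraction f c) (hp_inj : p.Injective) {T : Set (Sym2 V)}
    (hp : ∀ e ∈ T, posDist p e = 1)
    (hcut : ∀ u v, H.Adj u v → s(u, v) ∉ T → (∀ x, H.Reachable u x → H.degree x = 2) ∧
      ∀ a b, H.Adj a b → H.Reachable u a → W s(u, v) ≤ W s(a, b))
    (hone : ∀ u v a b, H.Adj u v → s(u, v) ∉ T → H.Adj a b → s(a, b) ∉ T →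
      H.Reachable u a → s(u, v) = s(a, b)) :
    c * ∑ e ∈ H.edgeFinset, W e ≤ ∑ e ∈ H.edgeFinset, f (posDist p e) * W e := by
  classical
  cases nonempty_fintype V
  rw [sum_edgeFinset_eq_sum_connectedComponent H W,
    sum_edgeFinset_eq_sum_connectedComponent H fun e => f (posDist p e) * W e, mul_sum]
  refine sum_le_sum fun κ _ => ?_
  have hle : κ.toSimpleGraph.spanningCoe ≤ H := SimpleGraph.spanningCoe_induce_le H κ.supp
  by_cases hcyc : ∃ e ∈ κ.toSimpleGraph.spanningCoe.edgeSet, e ∉ T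
  · obtain ⟨e, he, heT⟩ := hcyc
    induction e with
    | _ u v =>
      have huv : H.Adj u v := hle he
      have hreach {x : V} (hx : x ∈ κ.supp) : H.Reachable u x :=
        κ.reachable_of_mem_supp (κ.adj_spanningCoe_toSimpleGraph.1 he).1 hx
      obtain ⟨hdeg, hmin⟩ := hcut u v huv heT
      refine mul_sum_le_sum_discount_of_isCycles
        (isCycles_spanningCoe_of_degree_eq_two fun x hx => hdeg x (hreach hx)) he (hW _ huv)
        ?_ hf_mono hf_one hc hp_inj ?_
      · rintro ⟨a, b⟩ hab
        exact hmin a b (hle hab) (hreach (κ.adj_spanningCoe_toSimpleGraph.1 hab).1)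
      · rintro ⟨a, b⟩ hab hne
        refine hp _ (by_contra fun hnot => hne ?_)
        exact (hone u v a b huv heT (hle hab) hnot
          (hreach (κ.adj_spanningCoe_toSimpleGraph.1 hab).1)).symm
  · push Not at hcyc
    rw [mul_sum]
    refine sum_le_sum fun e he => ?_
    rw [SimpleGraph.mem_edgeFinset] at he
    rw [hp e (hcyc e he), hf_one]
    exact mul_le_mul_of_nonneg_right (hc.le_one hf_one) (hW e (SimpleGraph.edgeSet_mono hle he))

lemma edgeFinset_fromEdgeSet_of_not_isDiag {A : Finset (Sym2 V)} (hA : ∀ e ∈ A, ¬e.IsDiag)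
    [Fintype (SimpleGraph.fromEdgeSet (A : Set (Sym2 V))).edgeSet] :
    (SimpleGraph.fromEdgeSet (A : Set (Sym2 V))).edgeFinset = A := by
  ext e
  simpa using hA e

lemma degree_fromEdgeSet_of_not_isDiag [Fintype V] [DecidableEq V] {A : Finset (Sym2 V)}
    (hA : ∀ e ∈ A, ¬e.IsDiag) [DecidableRel (SimpleGraph.fromEdgeSet (A : Set (Sym2 V))).Adj]
    (v : V) : (SimpleGraph.fromEdgeSet (A : Set (Sym2 V))).degree v = #{e ∈ A | v ∈ e} := by
  rw [← SimpleGraph.card_incidenceFinset_eq_degree, SimpleGraph.incidenceFinset_eq_filter,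
    edgeFinset_fromEdgeSet_of_not_isDiag hA]

end LowerBound

section Value

lemma sum_sum_adj_eq_two_nsmul_sum_edgeFinset {V M : Type*} [AddCommMonoid M] [Fintype V]
    (G : SimpleGraph V) [DecidableRel G.Adj] (h : Sym2 V → M) :
    (∑ u, ∑ v, if G.Adj u v then h s(u, v) else 0) = 2 • ∑ e ∈ G.edgeFinset, h e := by
  classical
  have hmaps : ∀ x ∈ ({x | G.Adj x.1 x.2} : Finset (V × V)), Sym2.mk x.1 x.2 ∈ G.edgeFinset := by
    simp
  rw [← sum_product', univ_product_univ, ← sum_filter, ← sum_fiberwise_of_maps_to hmaps, smul_sum]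
  refine sum_congr rfl fun e he => ?_
  induction e with
  | _ a b =>
    have hab : G.Adj a b := by simpa using he
    have hfiber : ({x ∈ ({x | G.Adj x.1 x.2} : Finset (V × V)) | s(x.1, x.2) = s(a, b)}) =
        {(a, b), (b, a)} := by
      ext ⟨x, y⟩
      have := hab.symm
      simp only [mem_filter, mem_univ, true_and, Sym2.eq_iff, mem_insert, mem_singleton,
        Prod.mk.injEq]
      grind
    rw [hfiber, sum_pair (by simp [hab.ne]), Sym2.eq_swap (a := b), two_nsmul]

variable {V : Type} [Fintype V] {G : SimpleGraph V} [DecidableRel G.Adj] {w : V → V → ℝ}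
  {f : ℕ → ℝ}

lemma extVal_eq_sum_edgeFinset (hw_symm : ∀ u v, w u v = w v u)
    (d : V ≃ Fin (Fintype.card V)) :
    extVal G w f d =
      ∑ e ∈ G.edgeFinset, f (posDist (fun v => d v) e) * Sym2.lift ⟨w, hw_symm⟩ e := by
  have hsum := sum_sum_adj_eq_two_nsmul_sum_edgeFinset G
    fun e => f (posDist (fun v => d v) e) * Sym2.lift ⟨w, hw_symm⟩ e
  simp only [posDist_mk, Sym2.lift_mk, two_nsmul] at hsum
  have hval : extVal G w f d = 1 / 2 * ∑ u, ∑ v,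
      if G.Adj u v then f (Nat.dist (d u) (d v)) * w u v else 0 := by
    -- `extVal` decides adjacency classically, not by the given instance.
    unfold extVal
    congr! 6
  rw [hval, hsum]
  ring

lemma sum_discount_le_extVal (hw_symm : ∀ u v, w u v = w v u)
    (hw_nonneg : ∀ u v, G.Adj u v → 0 ≤ w u v) (hf_nonneg : ∀ i, 0 ≤ f i) {A : Finset (Sym2 V)}
    (hA : A ⊆ G.edgeFinset) (d : V ≃ Fin (Fintype.card V)) :
    ∑ e ∈ A, f (posDist (fun v => d v) e) * Sym2.lift ⟨w, hw_symm⟩ e ≤ extVal G w f d := by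
  rw [extVal_eq_sum_edgeFinset hw_symm]
  refine sum_le_sum_of_subset_of_nonneg hA ?_
  rintro ⟨u, v⟩ huv -
  exact mul_nonneg (hf_nonneg _) (hw_nonneg u v (by simpa using huv))

lemma iSup_extVal_le [DecidableEq V] (hw_symm : ∀ u v, w u v = w v u)
    (hf_nonneg : ∀ i, 0 ≤ f i) {k : ℕ} (hf_zero : ∀ i, k < i → f i = 0) {M : ℝ}
    (hM : ∀ B ⊆ G.edgeFinset, IsTwoMatching B → ∑ e ∈ B, Sym2.lift ⟨w, hw_symm⟩ e ≤ M) :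
    ⨆ d : V ≃ Fin (Fintype.card V), extVal G w f d ≤ (∑ i ∈ Ioc 0 k, f i) * M := by
  have : Nonempty (V ≃ Fin (Fintype.card V)) := ⟨Fintype.equivFin V⟩
  refine ciSup_le fun d => ?_
  rw [extVal_eq_sum_edgeFinset hw_symm]
  exact sum_discount_mul_weight_le (Fin.val_injective.comp d.injective)
    (fun e he => G.not_isDiag_of_mem_edgeSet (SimpleGraph.mem_edgeFinset.1 he)) hf_nonneg hf_zero hM

end Value

/-- Let `A` be a maximum-weight simple 2-matching (every vertex meets at
most two edges of `A`, so `A` is a disjoint union of paths and cycles), and let `A' ⊆ A` be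
obtained by deleting from each cycle of `A` exactly one minimum-weight edge.  Then every
ordering `d` that lays out each path of `A'` in consecutive positions in path order (i.e.
every edge of `A'` joins consecutive positions) satisfies
`val(d) ≥ OPT·(k+1)/(k(k+2))` — the cycle-cover algorithm is a `(1 + 1/(k+1))·k`
approximation. -/
theorem extTSP_cycle_cover_approx {V : Type} [Fintype V] [DecidableEq V]
    (G : SimpleGraph V) [DecidableRel G.Adj]
    (w : V → V → ℝ) (hw_symm : ∀ u v, w u v = w v u)
    (hw_pos : ∀ u v, G.Adj u v → 0 < w u v)
    (k : ℕ) (hk : 1 ≤ k)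
    (f : ℕ → ℝ) (hf_nonneg : ∀ i, 0 ≤ f i) (hf_mono : Antitone f)
    (hf_one : f 1 = 1) (hf_zero : ∀ i, k < i → f i = 0)
    (A A' : Finset (Sym2 V))
    (hAE : A ⊆ G.edgeFinset)
    (hAdeg : ∀ v : V, (A.filter (fun e => v ∈ e)).card ≤ 2)
    -- `A` has maximum weight among simple 2-matchings
    (hAmax : ∀ B : Finset (Sym2 V), B ⊆ G.edgeFinset →
      (∀ v : V, (B.filter (fun e => v ∈ e)).card ≤ 2) →
      ∑ e ∈ B, Sym2.lift ⟨w, hw_symm⟩ e ≤ ∑ e ∈ A, Sym2.lift ⟨w, hw_symm⟩ e)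
    (hA'A : A' ⊆ A)
    -- every deleted edge lies on a cycle of `A` (a connected component in which every
    -- vertex meets exactly two edges of `A`) and has minimum weight in that cycle
    (hdel : ∀ u v : V, s(u, v) ∈ A → s(u, v) ∉ A' →
      (∀ x : V, (SimpleGraph.fromEdgeSet (A : Set (Sym2 V))).Reachable u x →
        (A.filter (fun e => x ∈ e)).card = 2) ∧
      (∀ a b : V, s(a, b) ∈ A →
        (SimpleGraph.fromEdgeSet (A : Set (Sym2 V))).Reachable u a →
        w u v ≤ w a b))
    -- at most one edge is deleted from each connected component of `A`
    (hone : ∀ u v a b : V, s(u, v) ∈ A → s(u, v) ∉ A' → s(a, b) ∈ A → s(a, b) ∉ A' →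
      (SimpleGraph.fromEdgeSet (A : Set (Sym2 V))).Reachable u a →
      s(u, v) = s(a, b))
    -- every cycle of `A` has an edge deleted
    (hall : ∀ x : V,
      ((A.filter (fun e => x ∈ e)).card = 2 ∧
        (∀ y : V, (SimpleGraph.fromEdgeSet (A : Set (Sym2 V))).Reachable x y →
          (A.filter (fun e => y ∈ e)).card = 2)) →
      ∃ u v : V, s(u, v) ∈ A ∧ s(u, v) ∉ A' ∧
        (SimpleGraph.fromEdgeSet (A : Set (Sym2 V))).Reachable x u)
    (d : V ≃ Fin (Fintype.card V))
    -- `d` places the vertices of each path of `A'` consecutively, in path order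
    (hd : ∀ u v : V, s(u, v) ∈ A' → Nat.dist (d u) (d v) = 1) :
    extVal G w f d ≥
      (⨆ d' : V ≃ Fin (Fintype.card V), extVal G w f d') *
        ((k : ℝ) + 1) / ((k : ℝ) * ((k : ℝ) + 2)) := by
  classical
  set W : Sym2 V → ℝ := Sym2.lift ⟨w, hw_symm⟩
  set F : ℝ := ∑ i ∈ Ioc 0 k, f i
  set H := SimpleGraph.fromEdgeSet (A : Set (Sym2 V))
  have hloop : ∀ e ∈ A, ¬e.IsDiag := fun e he =>
    G.not_isDiag_of_mem_edgeSet (SimpleGraph.mem_edgeFinset.1 (hAE he))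
  have hedge : H.edgeFinset = A := edgeFinset_fromEdgeSet_of_not_isDiag hloop
  have hadj {u v : V} : H.Adj u v ↔ s(u, v) ∈ A := by
    rw [← hedge, SimpleGraph.mem_edgeFinset, SimpleGraph.mem_edgeSet]
  have hw_nonneg (u v : V) (huv : G.Adj u v) : 0 ≤ w u v := (hw_pos u v huv).le
  have hW : ∀ e ∈ H.edgeSet, 0 ≤ W e :=
    Sym2.ind fun u v huv => hw_nonneg u v (SimpleGraph.mem_edgeFinset.1 (hAE (hadj.1 huv)))
  have hopt : (⨆ d', extVal G w f d') ≤ F * ∑ e ∈ A, W e :=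
    iSup_extVal_le hw_symm hf_nonneg hf_zero hAmax
  have hkept : (k + 1) / (k * (k + 2)) * F * ∑ e ∈ H.edgeFinset, W e ≤
      ∑ e ∈ H.edgeFinset, f (posDist (fun v => d v) e) * W e := by
    refine mul_sum_le_sum_discount_of_cut hW hf_mono hf_one
      (isRetainedFraction_discount_sum hf_nonneg hf_mono hf_one hk hf_zero)
      (Fin.val_injective.comp d.injective) (T := A') (Sym2.ind hd) ?_ ?_
    · simpa only [hadj, mem_coe, H, degree_fromEdgeSet_of_not_isDiag hloop, W, Sym2.lift_mk]
        using hdel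
    · simpa only [hadj, mem_coe] using hone
  rw [hedge] at hkept
  calc (⨆ d', extVal G w f d') * ((k : ℝ) + 1) / (k * (k + 2))
      ≤ F * (∑ e ∈ A, W e) * (k + 1) / (k * (k + 2)) := by gcongr
    _ = (k + 1) / (k * (k + 2)) * F * ∑ e ∈ A, W e := by ring
    _ ≤ ∑ e ∈ A, f (posDist (fun v => d v) e) * W e := hkept
    _ ≤ extVal G w f d := sum_discount_le_extVal hw_symm hw_nonneg hf_nonneg hAE d
end

section
/- Let ℓ be an integer with k ≤ ℓ ≤ n. Suppose the ordering τ of V is locally optimal in the following (weak) sense: for every subset S ⊆ V with |S| ≤ ℓ and every ordering σ of S, Σ f(|τ(u)−τ(v)|)·w(u,v), summed over edges {u,v} ∈ E with at least one endpoint in S, is at least val_{G[S]}(σ), the value of σ on the induced subgraph G[S]. Then 2ℓ·val(τ) ≥ (ℓ−k)·OPT; equivalently, τ is a (2 + 2/(ℓ/k − 1))-approximation to the Ext-TSP optimum. -/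
open Classical in
/-- The Ext-TSP value of an ordering of `S` on the induced subgraph `G[S]`. -/
noncomputable def extValOn {V : Type} [Fintype V] [DecidableEq V] (G : SimpleGraph V)
    (w : V → V → ℝ) (f : ℕ → ℝ) (S : Finset V)
    (d : {x // x ∈ S} ≃ Fin S.card) : ℝ :=
  (1 / 2) * ∑ u : {x // x ∈ S}, ∑ v : {x // x ∈ S},
    if G.Adj u.1 v.1 then f (Nat.dist (d u) (d v)) * w u.1 v.1 else 0

/-!
Slide a window of `ℓ` consecutive positions along an optimal ordering `d`, letting it overhang both
ends. The set `S` of vertices in a window has at most `ℓ` elements, and closing up the gaps turns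
the restriction of `d` to `S` into an ordering of `S` in which no two vertices are further apart
than in `d`. As `f` is non-increasing, local optimality of `τ` says that the `d`-value of the edges
inside the window is at most the `τ`-value of the edges meeting it. Now sum over all windows: an
edge between vertices at distance `i` in `d` lies inside at least `ℓ - i` windows, which is at least
`ℓ - k` whenever the edge contributes to the value of `d`, while every edge meets at most `2ℓ`
windows.
-/

open Finset

lemma natDist_le_natDist_of_strictMono {m : ℕ} {g : Fin m → ℕ} (hg : StrictMono g)
    (a b : Fin m) : Nat.dist a b ≤ Nat.dist (g a) (g b) := by
  have sub_le_sub (a b : Fin m) : (b : ℕ) - a ≤ g b - g a := by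
    rw [← Fin.card_Ico, ← Nat.card_Ico]
    refine card_le_card_of_injOn g (fun i hi => ?_) hg.injective.injOn
    obtain ⟨hai, hib⟩ := mem_Ico.1 hi
    exact mem_Ico.2 ⟨hg.monotone hai, hg hib⟩
  exact Nat.add_le_add (sub_le_sub b a) (sub_le_sub a b)

lemma exists_equiv_fin_natDist_le {α : Type*} [Fintype α] {m : ℕ} (hm : Fintype.card α = m)
    {p : α → ℕ} (hp : Function.Injective p) :
    ∃ σ : α ≃ Fin m, ∀ u v, Nat.dist (σ u) (σ v) ≤ Nat.dist (p u) (p v) := by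
  let : LinearOrder α := LinearOrder.lift' p hp
  let e : Fin m ≃o α := Fintype.orderIsoFinOfCardEq α hm
  have hpe : StrictMono (p ∘ e) := fun _ _ hij => e.strictMono hij
  refine ⟨e.symm.toEquiv, fun u v => ?_⟩
  simpa using natDist_le_natDist_of_strictMono hpe (e.symm u) (e.symm v)

section Window

variable {V : Type*} [Fintype V]

/-- The set of vertices occupying the `ℓ` positions `i - ℓ, …, i - 1`, where `p v` is the position
of `v`. For `i < ℓ` the truncated subtraction cuts the window off at position `0`, so that each
vertex lies in exactly `ℓ` windows. -/
def window (p : V → ℕ) (ℓ i : ℕ) : Finset V := {v | p v ∈ Ico (i - ℓ) i}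

lemma mem_window {p : V → ℕ} {ℓ i : ℕ} {v : V} :
    v ∈ window p ℓ i ↔ i ∈ Ioc (p v) (p v + ℓ) := by
  simp [window, and_comm]

lemma card_window_le {p : V → ℕ} (hp : Function.Injective p) (ℓ i : ℕ) :
    #(window p ℓ i) ≤ ℓ := by
  calc #(window p ℓ i) ≤ #(Ico (i - ℓ) i) :=
        card_le_card_of_injOn p (fun _ hv => (mem_filter.1 hv).2) hp.injOn
    _ ≤ ℓ := by rw [Nat.card_Ico]; omega

variable [DecidableEq V]

lemma card_windows_meeting_le (p : V → ℕ) (ℓ : ℕ) (I : Finset ℕ) (u v : V) :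
    #{i ∈ I | u ∈ window p ℓ i ∨ v ∈ window p ℓ i} ≤ 2 * ℓ := by
  calc #{i ∈ I | u ∈ window p ℓ i ∨ v ∈ window p ℓ i}
      ≤ #(Ioc (p u) (p u + ℓ) ∪ Ioc (p v) (p v + ℓ)) := by
        refine card_le_card fun i hi => ?_
        simpa only [mem_union, mem_window] using (mem_filter.1 hi).2
    _ ≤ #(Ioc (p u) (p u + ℓ)) + #(Ioc (p v) (p v + ℓ)) := card_union_le _ _
    _ = 2 * ℓ := by simp only [Nat.card_Ioc]; omega

lemma le_card_windows_containing_add_dist {p : V → ℕ} {ℓ : ℕ} {I : Finset ℕ} {u : V}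
    (hI : Ioc (p u) (p u + ℓ) ⊆ I) (v : V) :
    ℓ ≤ #{i ∈ I | u ∈ window p ℓ i ∧ v ∈ window p ℓ i} + Nat.dist (p u) (p v) := by
  have subset_windows : Ioc (max (p u) (p v)) (min (p u) (p v) + ℓ) ⊆
      ({i ∈ I | u ∈ window p ℓ i ∧ v ∈ window p ℓ i} : Finset ℕ) := by
    intro i hi
    have hu : i ∈ Ioc (p u) (p u + ℓ) := by simp only [mem_Ioc] at hi ⊢; omega
    have hv : i ∈ Ioc (p v) (p v + ℓ) := by simp only [mem_Ioc] at hi ⊢; omega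
    exact mem_filter.2 ⟨hI hu, mem_window.2 hu, mem_window.2 hv⟩
  have card_le := card_le_card subset_windows
  rw [Nat.card_Ioc] at card_le
  unfold Nat.dist
  omega

end Window

lemma sum_sum_filter_eq_sum_card_mul {ι κ R : Type*} [NonAssocSemiring R]
    (s : Finset ι) (t : Finset κ) (r : ι → κ → Prop) [∀ i j, Decidable (r i j)] (g : κ → R) :
    ∑ i ∈ s, ∑ j ∈ t with r i j, g j = ∑ j ∈ t, #{i ∈ s | r i j} * g j := by
  simpa only [bipartiteAbove, bipartiteBelow, sum_const, nsmul_eq_mul] using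
    sum_sum_bipartiteAbove_eq_sum_sum_bipartiteBelow r fun _ j => g j

section Averaging

variable {V : Type*} [Fintype V] [DecidableEq V] {G : SimpleGraph V} [DecidableRel G.Adj]
  {R : Type*} [CommRing R] [LinearOrder R] [IsStrictOrderedRing R]

lemma sum_sub_dist_mul_le_of_forall_card_le {p : V → ℕ} (hp : Function.Injective p)
    {a b : G.Dart → R} (ha : ∀ e, 0 ≤ a e) (hb : ∀ e, 0 ≤ b e) {ℓ : ℕ}
    (hab : ∀ S : Finset V, #S ≤ ℓ →
      ∑ e : G.Dart with e.fst ∈ S ∧ e.snd ∈ S, a e ≤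
        ∑ e : G.Dart with e.fst ∈ S ∨ e.snd ∈ S, b e) :
    ∑ e : G.Dart, ((ℓ : R) - Nat.dist (p e.fst) (p e.snd)) * a e ≤
      2 * ℓ * ∑ e : G.Dart, b e := by
  let I : Finset ℕ := univ.biUnion fun v => Ioc (p v) (p v + ℓ)
  have hI (v : V) : Ioc (p v) (p v + ℓ) ⊆ I :=
    subset_biUnion_of_mem (fun v => Ioc (p v) (p v + ℓ)) (mem_univ v)
  calc ∑ e : G.Dart, ((ℓ : R) - Nat.dist (p e.fst) (p e.snd)) * a e
      ≤ ∑ e : G.Dart, #{i ∈ I | e.fst ∈ window p ℓ i ∧ e.snd ∈ window p ℓ i} * a e := by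
        refine sum_le_sum fun e _ => mul_le_mul_of_nonneg_right ?_ (ha e)
        rw [sub_le_iff_le_add]
        exact_mod_cast le_card_windows_containing_add_dist (hI e.fst) e.snd
    _ = ∑ i ∈ I, ∑ e : G.Dart with e.fst ∈ window p ℓ i ∧ e.snd ∈ window p ℓ i, a e :=
        (sum_sum_filter_eq_sum_card_mul I univ _ a).symm
    _ ≤ ∑ i ∈ I, ∑ e : G.Dart with e.fst ∈ window p ℓ i ∨ e.snd ∈ window p ℓ i, b e :=
        sum_le_sum fun i _ => hab _ (card_window_le hp ℓ i)
    _ = ∑ e : G.Dart, #{i ∈ I | e.fst ∈ window p ℓ i ∨ e.snd ∈ window p ℓ i} * b e :=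
        sum_sum_filter_eq_sum_card_mul I univ _ b
    _ ≤ ∑ e : G.Dart, 2 * ℓ * b e := by
        refine sum_le_sum fun e _ => mul_le_mul_of_nonneg_right ?_ (hb e)
        exact_mod_cast card_windows_meeting_le p ℓ I e.fst e.snd
    _ = 2 * ℓ * ∑ e : G.Dart, b e := (mul_sum _ _ _).symm

end Averaging

section DartSums

variable {V M : Type*} [Fintype V] [AddCommMonoid M]
  (G : SimpleGraph V) [DecidableRel G.Adj] (g : V → V → M)

lemma sum_sum_adj_eq_sum_darts :
    (∑ u, ∑ v, if G.Adj u v then g u v else 0) = ∑ e : G.Dart, g e.fst e.snd := by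
  rw [← Fintype.sum_prod_type' (f := fun u v => if G.Adj u v then g u v else 0), ← sum_filter]
  exact (sum_bij' (fun e _ => e.toProd) (fun x hx => ⟨x, (mem_filter.1 hx).2⟩)
    (by simp [SimpleGraph.Dart.adj]) (by simp) (by simp) (by simp) (by simp)).symm

lemma sum_sum_adj_and_eq_sum_darts (P : V → V → Prop) [∀ u v, Decidable (P u v)] :
    (∑ u, ∑ v, if G.Adj u v ∧ P u v then g u v else 0) =
      ∑ e : G.Dart with P e.fst e.snd, g e.fst e.snd := by
  simp only [ite_and, sum_filter]
  exact sum_sum_adj_eq_sum_darts G fun u v => if P u v then g u v else 0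

lemma sum_subtype_sum_subtype_adj_eq_sum_darts [DecidableEq V] (S : Finset V) :
    (∑ u : {x // x ∈ S}, ∑ v : {x // x ∈ S}, if G.Adj u v then g u v else 0) =
      ∑ e : G.Dart with e.fst ∈ S ∧ e.snd ∈ S, g e.fst e.snd := by
  calc (∑ u : {x // x ∈ S}, ∑ v : {x // x ∈ S}, if G.Adj u v then g u v else 0)
      = ∑ u ∈ S, ∑ v ∈ S, if G.Adj u v then g u v else 0 := by
        rw [← sum_coe_sort S]
        exact sum_congr rfl fun u _ => sum_coe_sort S fun v => if G.Adj u v then g u v else 0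
    _ = ∑ u, ∑ v, if G.Adj u v ∧ u ∈ S ∧ v ∈ S then g u v else 0 := by
        simp only [and_comm (a := G.Adj _ _), ite_and, sum_ite_irrel, sum_const_zero,
          sum_ite_mem, univ_inter]
    _ = ∑ e : G.Dart with e.fst ∈ S ∧ e.snd ∈ S, g e.fst e.snd :=
        sum_sum_adj_and_eq_sum_darts G g fun u v => u ∈ S ∧ v ∈ S

end DartSums

section DartValue

variable {V : Type*} {G : SimpleGraph V} {w : V → V → ℝ} {f : ℕ → ℝ}

/-- The contribution `f(|p(u) - p(v)|) · w(u, v)` of an edge `{u, v}`, with a chosen direction, to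
the value of an ordering placing each vertex `v` at position `p v`. Every edge underlies two darts,
whence the factor `1 / 2` in front of sums over darts. -/
def dartValue (w : V → V → ℝ) (f : ℕ → ℝ) (p : V → ℕ) (e : G.Dart) : ℝ :=
  f (Nat.dist (p e.fst) (p e.snd)) * w e.fst e.snd

lemma dartValue_nonneg (hw : ∀ u v, G.Adj u v → 0 ≤ w u v) (hf : ∀ i, 0 ≤ f i) (p : V → ℕ)
    (e : G.Dart) : 0 ≤ dartValue w f p e :=
  mul_nonneg (hf _) (hw _ _ e.adj)

lemma sub_mul_dartValue_le (hw : ∀ u v, G.Adj u v → 0 ≤ w u v) (hf : ∀ i, 0 ≤ f i) {k : ℕ}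
    (hfk : ∀ i, k < i → f i = 0) (c : ℝ) (p : V → ℕ) (e : G.Dart) :
    (c - k) * dartValue w f p e ≤ (c - Nat.dist (p e.fst) (p e.snd)) * dartValue w f p e := by
  rcases lt_or_ge k (Nat.dist (p e.fst) (p e.snd)) with hfar | hnear
  · simp [dartValue, hfk _ hfar]
  · have value_nonneg := dartValue_nonneg hw hf p e
    gcongr

end DartValue

section Value

variable {V : Type} [Fintype V] {G : SimpleGraph V} [DecidableRel G.Adj] {w : V → V → ℝ}
  {f : ℕ → ℝ}

lemma extVal_eq_sum_darts (d : V ≃ Fin (Fintype.card V)) :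
    extVal G w f d = (1 / 2) * ∑ e : G.Dart, dartValue w f (fun v => d v) e := by
  simp only [extVal, dartValue]
  congr 1
  convert sum_sum_adj_eq_sum_darts G fun u v => f (Nat.dist (d u) (d v)) * w u v

lemma exists_sum_darts_le_extValOn [DecidableEq V]
    (hw : ∀ u v, G.Adj u v → 0 ≤ w u v) (hf : Antitone f) {p : V → ℕ}
    (hp : Function.Injective p) (S : Finset V) :
    ∃ σ : {x // x ∈ S} ≃ Fin S.card,
      (1 / 2) * ∑ e : G.Dart with e.fst ∈ S ∧ e.snd ∈ S, dartValue w f p e ≤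
        extValOn G w f S σ := by
  obtain ⟨σ, hσ⟩ := exists_equiv_fin_natDist_le (Fintype.card_coe S)
    (hp.comp Subtype.val_injective)
  refine ⟨σ, ?_⟩
  have sum_eq := sum_subtype_sum_subtype_adj_eq_sum_darts G
    (fun u v => f (Nat.dist (p u) (p v)) * w u v) S
  simp only [dartValue, extValOn, ← sum_eq]
  gcongr with u _ v _
  split_ifs with huv
  · exact mul_le_mul_of_nonneg_right (hf (hσ u v)) (hw u v huv)
  · exact le_rfl

end Value

/-- If `τ` is locally optimal in the weak sense — for every `S` of at most
`ℓ` vertices and every ordering `σ` of `S`, the discounted `τ`-weight of the edges meeting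
`S` is at least `val_{G[S]}(σ)` — then `2ℓ·val(τ) ≥ (ℓ-k)·OPT`, i.e. `τ` is a
`(2 + 2/(ℓ/k - 1))`-approximation. -/
theorem extTSP_local_search_approx {V : Type} [Fintype V] [DecidableEq V]
    (G : SimpleGraph V) [DecidableRel G.Adj]
    (w : V → V → ℝ) (hw_symm : ∀ u v, w u v = w v u)
    (hw_pos : ∀ u v, G.Adj u v → 0 < w u v)
    (k : ℕ) (hk : 1 ≤ k)
    (f : ℕ → ℝ) (hf_nonneg : ∀ i, 0 ≤ f i) (hf_mono : Antitone f)
    (hf_one : f 1 = 1) (hf_zero : ∀ i, k < i → f i = 0)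
    (ℓ : ℕ) (hkℓ : k ≤ ℓ) (hℓn : ℓ ≤ Fintype.card V)
    (τ : V ≃ Fin (Fintype.card V))
    (hloc : ∀ S : Finset V, S.card ≤ ℓ →
      ∀ σ : {x // x ∈ S} ≃ Fin S.card,
        (1 / 2) * (∑ u : V, ∑ v : V,
            if G.Adj u v ∧ (u ∈ S ∨ v ∈ S)
            then f (Nat.dist (τ u) (τ v)) * w u v else 0)
          ≥ extValOn G w f S σ) :
    2 * (ℓ : ℝ) * extVal G w f τ ≥
      ((ℓ : ℝ) - (k : ℝ)) * ⨆ d : V ≃ Fin (Fintype.card V), extVal G w f d := by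
  have hw u v (huv : G.Adj u v) : 0 ≤ w u v := (hw_pos u v huv).le
  have : Nonempty (V ≃ Fin (Fintype.card V)) := ⟨τ⟩
  obtain ⟨d, hd⟩ := exists_eq_ciSup_of_finite (f := extVal G w f)
  have hd_inj : Function.Injective fun v => (d v : ℕ) := Fin.val_injective.comp d.injective
  have edges_within_le_edges_meeting (S : Finset V) (hS : #S ≤ ℓ) :
      ∑ e : G.Dart with e.fst ∈ S ∧ e.snd ∈ S, dartValue w f (fun v => d v) e ≤
        ∑ e : G.Dart with e.fst ∈ S ∨ e.snd ∈ S, dartValue w f (fun v => τ v) e := by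
    obtain ⟨σ, hσ⟩ := exists_sum_darts_le_extValOn hw hf_mono hd_inj S
    have hSσ := hloc S hS σ
    rw [sum_sum_adj_and_eq_sum_darts G _ fun u v => u ∈ S ∨ v ∈ S] at hSσ
    exact le_of_mul_le_mul_left (hσ.trans hSσ) one_half_pos
  have averaged := sum_sub_dist_mul_le_of_forall_card_le hd_inj (dartValue_nonneg hw hf_nonneg _)
    (dartValue_nonneg hw hf_nonneg _) edges_within_le_edges_meeting
  have discounted := sum_le_sum fun (e : G.Dart) (_ : e ∈ univ) =>
    sub_mul_dartValue_le hw hf_nonneg hf_zero ℓ (fun v => d v) e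
  rw [← mul_sum] at discounted
  rw [← hd, extVal_eq_sum_darts, extVal_eq_sum_darts]
  linarith
end
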